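/- Let f be C²-smooth on an open neighbourhood of S^{n-1} with ∫ f dσ_{n-1} = 0. Then ∫ f² dσ_{n-1} ≤ (1/(n−1)) ∫ ‖f''_S‖²_HS dσ_{n-1}. Moreover, if in addition the restriction of f to S^{n-1} is orthogonal to all linear functions, then ∫ f² dσ_{n-1} ≤ (1/(2n(n+2))) ∫ ‖f''_S‖²_HS dσ_{n-1}. -/

import Mathlib

open MeasureTheory Metric Filter
open scoped RealInnerProductSpace ENNReal NNReal

noncomputable section

namespace SecondOrderConc

/-- Euclidean space ℝⁿ. -/
abbrev E (n : ℕ) : Type := EuclideanSpace ℝ (Fin n)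

/-- The uniform (normalized rotation-invariant) probability measure `σ_{n-1}`
on the unit sphere `S^{n-1}`, viewed as a measure on the ambient space ℝⁿ. -/
def sphMeasure (n : ℕ) : Measure (E n) :=
  ((((volume : Measure (E n)).toSphere).map Subtype.val) Set.univ)⁻¹ •
    (((volume : Measure (E n)).toSphere).map Subtype.val)

variable {n : ℕ}

/-- Euclidean Hessian of `f` at `x`, as a continuous linear operator on ℝⁿ. -/
def hess (f : E n → ℝ) (x : E n) : E n →L[ℝ] E n :=
  fderiv ℝ (gradient f) x

/-- Squared Hilbert–Schmidt norm of an operator on ℝⁿ. -/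
def hsNormSq (A : E n →L[ℝ] E n) : ℝ :=
  ∑ i : Fin n, ‖A (EuclideanSpace.single i 1)‖ ^ 2

/-- Orthogonal projection of ℝⁿ onto `θ^⊥` (for a unit vector `θ`). -/
def projPerp (θ : E n) : E n →L[ℝ] E n :=
  ContinuousLinearMap.id ℝ (E n) - (innerSL ℝ θ).smulRight θ

/-- Spherical gradient `∇_S f(θ) = ∇f(θ) − ⟨∇f(θ),θ⟩θ`. -/
def sgrad (f : E n → ℝ) (θ : E n) : E n :=
  gradient f θ - ⟪gradient f θ, θ⟫ • θ

/-- Spherical Hessian `f''_S(θ) = P_{θ^⊥} (f''(θ) − ⟨∇f(θ),θ⟩ I_n) P_{θ^⊥}`. -/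
def sHess (f : E n → ℝ) (θ : E n) : E n →L[ℝ] E n :=
  (projPerp θ).comp
    ((hess f θ - ⟪gradient f θ, θ⟫ • ContinuousLinearMap.id ℝ (E n)).comp (projPerp θ))

/-- Spherical Laplacian `Δ_S f(θ) = Tr f''_S(θ)`. -/
def sLap (f : E n → ℝ) (θ : E n) : ℝ :=
  LinearMap.trace ℝ (E n) (sHess f θ).toLinearMap

/-- Euclidean Laplacian `Δ f = Tr f''`. -/
def eLap (f : E n → ℝ) (x : E n) : ℝ :=
  LinearMap.trace ℝ (E n) (hess f x).toLinearMap

/-- 0-homogeneous extension to `ℝⁿ \ {0}` of (the restriction to the sphere of) `g`. -/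
def ext0 (g : E n → ℝ) : E n → ℝ := fun x => g (‖x‖⁻¹ • x)


/-!
The rotation fields `R_ij = x_i ∂_j - x_j ∂_i` are skew-symmetric in `L²(σ_{n-1})`, because
rotations preserve `σ_{n-1}`. They preserve the degree of polynomials, and on the sphere the sum of
their squares acts on homogeneous polynomials of degree `d` as `-2 d (d + n - 2)`, up to polynomials
of lower degree. Splitting polynomials orthogonally by degree and using their density, one gets
`λ ∫ g² ≤ ∫ |∇_S g|²` with `λ = (k + 1) (k + n - 1)` for every `g` orthogonal to the polynomials of
degree at most `k`.

The second order inequality comes from applying this to `f` and to its rotational derivatives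
`R_ij f`, which inherit the orthogonality of `f`. Pointwise, `∑ (R_ij f)² = 2 |∇_S f|²` and
`∑ |∇_S R_ij f|² = 2 ‖f''_S‖² + 2 (n - 2) |∇_S f|²`, so that
`λ (λ - (n - 2)) ∫ f² ≤ ∫ ‖f''_S‖²`; the two cases of the theorem are `k = 0` and `k = 1`.
-/

section SpectralGap

variable {ι M H : Type*} [AddCommGroup M] [Module ℝ M]
  [NormedAddCommGroup H] [InnerProductSpace ℝ H]

lemma exists_mem_forall_inner_sub_eq_zero (T : M →ₗ[ℝ] H) (W : Submodule ℝ M)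
    [FiniteDimensional ℝ W] (g : H) : ∃ b ∈ W, ∀ p ∈ W, ⟪g - T b, T p⟫ = 0 := by
  obtain ⟨b, hb, hTb⟩ := Submodule.mem_map.1 ((W.map T).starProjection_apply_mem g)
  refine ⟨b, hb, fun p hp => ?_⟩
  rw [hTb]
  exact Submodule.starProjection_inner_eq_zero g (T p) (Submodule.mem_map_of_mem hp)

variable [Fintype ι]

/-- An exhausting filtration `V` of `M` preserved by operators `D i` which are skew-symmetric for
the form pulled back along `T : M → H`, and for which the Casimir operator `∑ i, D i ∘ D i` is,
after applying `T`, triangular with diagonal entries `-lam d`. The model is the filtration of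
polynomials by degree, with the infinitesimal rotations as operators and with `T` the restriction
to the sphere, which has a kernel. -/
structure IsSkewFiltration (V : ℕ → Submodule ℝ M) (T : M →ₗ[ℝ] H) (D : ι → M →ₗ[ℝ] M)
    (lam : ℕ → ℝ) : Prop where
  mono : Monotone V
  exists_mem : ∀ p, ∃ d, p ∈ V d
  map_mem : ∀ i d, ∀ p ∈ V d, D i p ∈ V d
  skew : ∀ i p q, ⟪T (D i p), T q⟫ = -⟪T p, T (D i q)⟫
  casimir : ∀ d, ∀ p ∈ V (d + 1), ∃ q ∈ V d,
    T (∑ i, D i (D i p)) = T q - lam (d + 1) • T p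

namespace IsSkewFiltration

variable {V : ℕ → Submodule ℝ M} {T : M →ₗ[ℝ] H} {D : ι → M →ₗ[ℝ] M} {lam : ℕ → ℝ}
  {d k : ℕ} {a b c : M}

lemma sum_inner_map (hV : IsSkewFiltration V T D lam) (p q : M) :
    ∑ i, ⟪T (D i p), T (D i q)⟫ = -⟪T (∑ i, D i (D i p)), T q⟫ := by
  rw [map_sum, sum_inner, ← Finset.sum_neg_distrib]
  exact Finset.sum_congr rfl fun i _ => by rw [hV.skew i (D i p) q, neg_neg]

lemma sum_norm_sq_map_add (hV : IsSkewFiltration V T D lam) (hb : b ∈ V d)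
    (hc : ∀ p ∈ V d, ⟪T c, T p⟫ = 0) :
    ∑ i, ‖T (D i (b + c))‖ ^ 2 = ∑ i, ‖T (D i b)‖ ^ 2 + ∑ i, ‖T (D i c)‖ ^ 2 := by
  have hcross : ∑ i, ⟪T (D i b), T (D i c)⟫ = 0 := by
    rw [hV.sum_inner_map, real_inner_comm, neg_eq_zero]
    exact hc _ (Submodule.sum_mem _ fun i _ => hV.map_mem i d _ (hV.map_mem i d b hb))
  simp only [map_add, norm_add_sq_real, Finset.sum_add_distrib, ← Finset.mul_sum, hcross,
    mul_zero, add_zero]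

lemma sum_norm_sq_map_eq (hV : IsSkewFiltration V T D lam) (hc : c ∈ V (d + 1))
    (hcd : ∀ p ∈ V d, ⟪T c, T p⟫ = 0) :
    ∑ i, ‖T (D i c)‖ ^ 2 = lam (d + 1) * ‖T c‖ ^ 2 := by
  obtain ⟨q, hq, hcq⟩ := hV.casimir d c hc
  simp only [← real_inner_self_eq_norm_sq]
  rw [hV.sum_inner_map, hcq, inner_sub_left, real_inner_smul_left, real_inner_comm, hcd q hq,
    zero_sub, neg_neg]

lemma mul_norm_sq_le_of_mem (hV : IsSkewFiltration V T D lam) [∀ d, FiniteDimensional ℝ (V d)]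
    (hlam : Monotone lam) (ha : a ∈ V d) (hak : ∀ p ∈ V k, ⟪T a, T p⟫ = 0) :
    lam (k + 1) * ‖T a‖ ^ 2 ≤ ∑ i, ‖T (D i a)‖ ^ 2 := by
  have of_le : ∀ {d a}, d ≤ k → a ∈ V d → (∀ p ∈ V k, ⟪T a, T p⟫ = 0) →
      lam (k + 1) * ‖T a‖ ^ 2 ≤ ∑ i, ‖T (D i a)‖ ^ 2 := by
    intro d a hd ha hak
    have hTa : T a = 0 := inner_self_eq_zero.1 (hak a (hV.mono hd ha))
    rw [hTa, norm_zero, zero_pow two_ne_zero, mul_zero]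
    positivity
  induction d generalizing a with
  | zero => exact of_le k.zero_le ha hak
  | succ d ih =>
    rcases le_or_gt (d + 1) k with hdk | hkd
    · exact of_le hdk ha hak
    obtain ⟨b, hb, hbd⟩ := exists_mem_forall_inner_sub_eq_zero T (V d) (T a)
    obtain ⟨c, rfl⟩ : ∃ c, a = b + c := ⟨a - b, by abel⟩
    have hc : c ∈ V (d + 1) := by simpa using (V (d + 1)).sub_mem ha (hV.mono d.le_succ hb)
    have hcd : ∀ p ∈ V d, ⟪T c, T p⟫ = 0 := fun p hp => by simpa using hbd p hp
    have hbk : ∀ p ∈ V k, ⟪T b, T p⟫ = 0 := fun p hp => by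
      simpa [inner_add_left, hcd p (hV.mono (Nat.le_of_lt_succ hkd) hp)] using hak p hp
    calc lam (k + 1) * ‖T (b + c)‖ ^ 2
        = lam (k + 1) * ‖T b‖ ^ 2 + lam (k + 1) * ‖T c‖ ^ 2 := by
          rw [map_add, norm_add_sq_real, real_inner_comm, hcd b hb]; ring
      _ ≤ ∑ i, ‖T (D i b)‖ ^ 2 + lam (d + 1) * ‖T c‖ ^ 2 := by
          gcongr
          exacts [ih hb hbk, hlam hkd]
      _ = ∑ i, ‖T (D i (b + c))‖ ^ 2 := by
          rw [hV.sum_norm_sq_map_add hb hcd, hV.sum_norm_sq_map_eq hc hcd]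

lemma norm_map_le_of_weakDeriv (hV : IsSkewFiltration V T D lam) {g h : H} {i : ι}
    (hgh : ∀ p, ⟪h, T p⟫ = -⟪g, T (D i p)⟫) (ha : a ∈ V d)
    (hga : ∀ p ∈ V d, ⟪g - T a, T p⟫ = 0) : ‖T (D i a)‖ ≤ ‖h‖ := by
  have hinner : ⟪h, T (D i a)⟫ = ‖T (D i a)‖ ^ 2 := by
    have hgT := hga _ (hV.map_mem i d _ (hV.map_mem i d a ha))
    rw [inner_sub_left, sub_eq_zero] at hgT
    rw [hgh, hgT, ← hV.skew, real_inner_self_eq_norm_sq]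
  have hcs : ‖T (D i a)‖ * ‖T (D i a)‖ ≤ ‖h‖ * ‖T (D i a)‖ := by
    rw [← sq, ← hinner]; exact real_inner_le_norm _ _
  by_contra! hlt
  exact hcs.not_gt (mul_lt_mul_of_pos_right hlt ((norm_nonneg h).trans_lt hlt))

lemma mul_sub_le_of_weakDeriv (hV : IsSkewFiltration V T D lam) [∀ d, FiniteDimensional ℝ (V d)]
    (hlam : Monotone lam) (hk : 0 ≤ lam (k + 1)) {g : H} {h : ι → H}
    (hgh : ∀ i p, ⟪h i, T p⟫ = -⟪g, T (D i p)⟫) (hgk : ∀ p ∈ V k, ⟪g, T p⟫ = 0) (p : M) :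
    lam (k + 1) * (‖g‖ ^ 2 - ‖g - T p‖ ^ 2) ≤ ∑ i, ‖h i‖ ^ 2 := by
  obtain ⟨d₀, hpd₀⟩ := hV.exists_mem p
  set d := max d₀ k
  have hpd : p ∈ V d := hV.mono (le_max_left _ _) hpd₀
  obtain ⟨a, ha, hga⟩ := exists_mem_forall_inner_sub_eq_zero T (V d) g
  have hak : ∀ q ∈ V k, ⟪T a, T q⟫ = 0 := fun q hq => by
    have := hga q (hV.mono (le_max_right _ _) hq)
    rwa [inner_sub_left, hgk q hq, zero_sub, neg_eq_zero] at this
  have hg : ‖g‖ ^ 2 = ‖g - T a‖ ^ 2 + ‖T a‖ ^ 2 := by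
    conv_lhs => rw [← sub_add_cancel g (T a), norm_add_sq_real, hga a ha]
    ring
  have hgp : ‖g - T a‖ ^ 2 ≤ ‖g - T p‖ ^ 2 := by
    have hsplit : g - T p = (g - T a) + T (a - p) := by rw [map_sub]; abel
    rw [hsplit, norm_add_sq_real, hga _ ((V d).sub_mem ha hpd)]
    linarith [sq_nonneg ‖T (a - p)‖]
  calc lam (k + 1) * (‖g‖ ^ 2 - ‖g - T p‖ ^ 2)
      ≤ lam (k + 1) * ‖T a‖ ^ 2 := by gcongr; linarith
    _ ≤ ∑ i, ‖T (D i a)‖ ^ 2 := hV.mul_norm_sq_le_of_mem hlam ha hak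
    _ ≤ ∑ i, ‖h i‖ ^ 2 := by
      gcongr with i
      exact hV.norm_map_le_of_weakDeriv (hgh i) ha hga

theorem mul_norm_sq_le_of_weakDeriv (hV : IsSkewFiltration V T D lam)
    [∀ d, FiniteDimensional ℝ (V d)] (hlam : Monotone lam) (hk : 0 ≤ lam (k + 1)) {g : H}
    {h : ι → H} (hg : g ∈ closure (Set.range T)) (hgh : ∀ i p, ⟪h i, T p⟫ = -⟪g, T (D i p)⟫)
    (hgk : ∀ p ∈ V k, ⟪g, T p⟫ = 0) :
    lam (k + 1) * ‖g‖ ^ 2 ≤ ∑ i, ‖h i‖ ^ 2 := by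
  have hclosed : IsClosed {y : H | lam (k + 1) * (‖g‖ ^ 2 - ‖g - y‖ ^ 2) ≤ ∑ i, ‖h i‖ ^ 2} :=
    isClosed_le (by fun_prop) continuous_const
  have hrange : Set.range T ⊆ {y : H | lam (k + 1) * (‖g‖ ^ 2 - ‖g - y‖ ^ 2) ≤ ∑ i, ‖h i‖ ^ 2} := by
    rintro _ ⟨p, rfl⟩
    exact hV.mul_sub_le_of_weakDeriv hlam hk hgh hgk p
  simpa using closure_minimal hrange hclosed hg

end IsSkewFiltration

end SpectralGap

section Polynomial

open MvPolynomial

variable {σ R : Type*} [CommRing R] {p : MvPolynomial σ R} {m d : ℕ}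

lemma restrictTotalDegree_mono : Monotone (restrictTotalDegree σ R) := fun _ _ hd p hp => by
  rw [mem_restrictTotalDegree] at hp ⊢
  exact hp.trans hd

lemma mem_restrictTotalDegree_of_isHomogeneous (hp : p.IsHomogeneous m) (hmd : m ≤ d) :
    p ∈ restrictTotalDegree σ R d :=
  (mem_restrictTotalDegree _ _ _).2 (hp.totalDegree_le.trans hmd)

lemma exists_isHomogeneous_add_of_mem_restrictTotalDegree
    (hp : p ∈ restrictTotalDegree σ R (d + 1)) :
    ∃ h r, h.IsHomogeneous (d + 1) ∧ r ∈ restrictTotalDegree σ R d ∧ p = h + r := by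
  refine ⟨homogeneousComponent (d + 1) p, p - homogeneousComponent (d + 1) p,
    homogeneousComponent_isHomogeneous _ _, ?_, by ring⟩
  rw [mem_restrictTotalDegree] at hp ⊢
  refine Finset.sup_le fun s hs => ?_
  rw [mem_support_iff, coeff_sub, coeff_homogeneousComponent] at hs
  have hsp : s.degree ≠ d + 1 := fun h => by simp [h] at hs
  rw [if_neg hsp, sub_zero, ← mem_support_iff] at hs
  exact Nat.le_of_lt_succ (lt_of_le_of_ne ((le_totalDegree hs).trans hp) hsp)

lemma isHomogeneous_X_mul_pderiv (hp : p.IsHomogeneous m) (i j : σ) :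
    (X i * pderiv j p).IsHomogeneous m := by
  cases m with
  | zero =>
    rw [(totalDegree_eq_zero_iff_eq_C).1 ((totalDegree_zero_iff_isHomogeneous σ).2 hp), pderiv_C,
      mul_zero]
    exact isHomogeneous_zero ..
  | succ m => simpa [add_comm] using (isHomogeneous_X R i).mul (hp.pderiv (i := j))

/-- The infinitesimal rotation `x_i ∂_j - x_j ∂_i` acting on polynomials. -/
def rotPoly (i j : σ) : Derivation R (MvPolynomial σ R) (MvPolynomial σ R) :=
  X (R := R) i • pderiv j - X (R := R) j • pderiv i

lemma rotPoly_apply (i j : σ) (p : MvPolynomial σ R) :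
    rotPoly i j p = X i * pderiv j p - X j * pderiv i p := rfl

lemma rotPoly_swap (i j : σ) (p : MvPolynomial σ R) : rotPoly j i p = -rotPoly i j p := by
  rw [rotPoly_apply, rotPoly_apply, neg_sub]

lemma isHomogeneous_rotPoly (hp : p.IsHomogeneous m) (i j : σ) :
    (rotPoly i j p).IsHomogeneous m :=
  (isHomogeneous_X_mul_pderiv hp i j).sub (isHomogeneous_X_mul_pderiv hp j i)

lemma rotPoly_mem_restrictTotalDegree (hp : p ∈ restrictTotalDegree σ R d) (i j : σ) :
    rotPoly i j p ∈ restrictTotalDegree σ R d := by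
  induction d generalizing p with
  | zero =>
    rw [mem_restrictTotalDegree, Nat.le_zero, totalDegree_zero_iff_isHomogeneous] at hp
    exact mem_restrictTotalDegree_of_isHomogeneous (isHomogeneous_rotPoly hp i j) le_rfl
  | succ d ih =>
    obtain ⟨h, r, hh, hr, rfl⟩ := exists_isHomogeneous_add_of_mem_restrictTotalDegree hp
    rw [map_add]
    exact add_mem (mem_restrictTotalDegree_of_isHomogeneous (isHomogeneous_rotPoly hh i j) le_rfl)
      (restrictTotalDegree_mono d.le_succ (ih hr))

variable [Fintype σ]

/-- The Laplacian of a polynomial. -/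
def lapPoly (p : MvPolynomial σ R) : MvPolynomial σ R := ∑ i, pderiv i (pderiv i p)

lemma lapPoly_mem_restrictTotalDegree (hp : p.IsHomogeneous (d + 1)) :
    lapPoly p ∈ restrictTotalDegree σ R d :=
  Submodule.sum_mem _ fun i _ => mem_restrictTotalDegree_of_isHomogeneous
    ((hp.pderiv (i := i)).pderiv (i := i)) (by lia)

lemma sum_X_mul_pderiv_pderiv (hp : p.IsHomogeneous m) (i : σ) :
    ∑ j, X j * pderiv j (pderiv i p) = (m - 1 : R) • pderiv i p := by
  cases m with
  | zero =>
    rw [(totalDegree_eq_zero_iff_eq_C).1 ((totalDegree_zero_iff_isHomogeneous σ).2 hp)]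
    simp
  | succ m => rw [(hp.pderiv (i := i)).sum_X_mul_pderiv]; simp [Nat.cast_smul_eq_nsmul]

lemma sum_X_mul_pderiv_rotPoly (hp : p.IsHomogeneous m) :
    ∑ i, ∑ j, X i * pderiv j (rotPoly i j p) =
      (∑ i, X i ^ 2) * lapPoly p - (m * (m + Fintype.card σ - 2) : R) • p := by
  classical
  have hterm : ∀ i j, X i * pderiv j (rotPoly i j p) =
      X i ^ 2 * pderiv j (pderiv j p) + (if j = i then X i * pderiv j p else 0)
        - X i * pderiv i p - X i * (X j * pderiv j (pderiv i p)) := fun i j => by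
    rw [rotPoly_apply, map_sub, pderiv_mul, pderiv_mul, pderiv_X_self, pderiv_X, Pi.single_apply]
    split_ifs <;> simp_all <;> ring
  have heuler : ∑ i, X i * pderiv i p = (m : R) • p := by
    rw [hp.sum_X_mul_pderiv, Nat.cast_smul_eq_nsmul]
  simp only [hterm, Finset.sum_sub_distrib, Finset.sum_add_distrib, ← Finset.mul_sum,
    Finset.sum_ite_eq', Finset.mem_univ, if_true, Finset.sum_const, Finset.card_univ,
    ← Finset.smul_sum, sum_X_mul_pderiv_pderiv hp, mul_smul_comm, heuler, ← lapPoly.eq_1,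
    ← Finset.sum_mul, ← Nat.cast_smul_eq_nsmul R]
  module

lemma sum_rotPoly_rotPoly (hp : p.IsHomogeneous m) :
    ∑ i, ∑ j, rotPoly i j (rotPoly i j p) =
      (2 : R) • ((∑ i, X i ^ 2) * lapPoly p) - (2 * (m * (m + Fintype.card σ - 2)) : R) • p := by
  have hswap : ∑ i, ∑ j, X j * pderiv i (rotPoly i j p) =
      -∑ i, ∑ j, X i * pderiv j (rotPoly i j p) := by
    rw [Finset.sum_comm]
    simp only [← Finset.sum_neg_distrib]
    refine Finset.sum_congr rfl fun i _ => Finset.sum_congr rfl fun j _ => ?_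
    rw [rotPoly_swap i j, map_neg, mul_neg]
  simp only [rotPoly_apply _ _ (rotPoly _ _ p), Finset.sum_sub_distrib]
  rw [hswap, sum_X_mul_pderiv_rotPoly hp]
  module

lemma exists_map_sum_rotPoly_rotPoly {A : Type*} [AddCommGroup A] [Module R A]
    (T : MvPolynomial σ R →ₗ[R] A) (hT : ∀ q, T ((∑ i, X i ^ 2) * q) = T q)
    (hp : p ∈ restrictTotalDegree σ R (d + 1)) :
    ∃ q ∈ restrictTotalDegree σ R d, T (∑ i, ∑ j, rotPoly i j (rotPoly i j p)) =
      T q - (2 * ((d + 1 : ℕ) * ((d + 1 : ℕ) + Fintype.card σ - 2)) : R) • T p := by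
  obtain ⟨h, r, hh, hr, rfl⟩ := exists_isHomogeneous_add_of_mem_restrictTotalDegree hp
  set c : R := 2 * ((d + 1 : ℕ) * ((d + 1 : ℕ) + Fintype.card σ - 2))
  refine ⟨(2 : R) • lapPoly h + ∑ i, ∑ j, rotPoly i j (rotPoly i j r) + c • r, ?_, ?_⟩
  · exact add_mem (add_mem (Submodule.smul_mem _ _ (lapPoly_mem_restrictTotalDegree hh))
      (sum_mem fun i _ => sum_mem fun j _ => rotPoly_mem_restrictTotalDegree
        (rotPoly_mem_restrictTotalDegree hr i j) i j)) (Submodule.smul_mem _ _ hr)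
  · have hsum : ∑ i, ∑ j, rotPoly i j (rotPoly i j (h + r)) =
        (2 : R) • ((∑ i, X i ^ 2) * lapPoly h) - c • h
          + ∑ i, ∑ j, rotPoly i j (rotPoly i j r) := by
      simp only [map_add, Finset.sum_add_distrib, sum_rotPoly_rotPoly hh, c]
    rw [hsum]
    simp only [map_add, map_sub, map_smul, hT]
    module

end Polynomial

section PolynomialFunction

open MvPolynomial

variable {σ : Type*}

lemma exists_eval_eq_of_mem_restrictTotalDegree_zero {p : MvPolynomial σ ℝ}
    (hp : p ∈ restrictTotalDegree σ ℝ 0) :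
    ∃ a, ∀ x : EuclideanSpace ℝ σ, eval x.ofLp p = a := by
  rw [mem_restrictTotalDegree, Nat.le_zero, totalDegree_eq_zero_iff_eq_C] at hp
  exact ⟨p.coeff 0, fun x => by rw [hp]; simp⟩

lemma exists_eval_sub_lt {K : Set (EuclideanSpace ℝ σ)} (hK : IsCompact K)
    {g : EuclideanSpace ℝ σ → ℝ} (hg : ContinuousOn g K) {ε : ℝ} (hε : 0 < ε) :
    ∃ p : MvPolynomial σ ℝ, ∀ x ∈ K, |eval x.ofLp p - g x| < ε := by
  have := isCompact_iff_compactSpace.1 hK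
  let coord : σ → C(K, ℝ) := fun i => ⟨fun x => x.1 i, by fun_prop⟩
  have heval (p : MvPolynomial σ ℝ) (x : K) : aeval coord p x = eval x.1.ofLp p := by
    rw [← coe_aeval_eq_eval]
    exact comp_aeval_apply (φ := ContinuousMap.evalAlgHom ℝ ℝ x) coord p
  have hsep : (aeval (R := ℝ) coord).range.SeparatesPoints := by
    intro x y hxy
    obtain ⟨i, hi⟩ : ∃ i, x.1 i ≠ y.1 i := by
      by_contra! h
      exact hxy (Subtype.ext (PiLp.ext h))
    exact ⟨_, ⟨aeval coord (X i), ⟨_, rfl⟩, rfl⟩, by simpa only [heval, eval_X] using hi⟩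
  obtain ⟨⟨_, p, rfl⟩, hp⟩ :=
    ContinuousMap.exists_mem_subalgebra_near_continuous_of_separatesPoints _ hsep _
      hg.domRestrict ε hε
  exact ⟨p, fun x hx => by simpa [heval] using hp ⟨x, hx⟩⟩

variable [Fintype σ]

lemma contDiff_eval (p : MvPolynomial σ ℝ) {k : WithTop ℕ∞} :
    ContDiff ℝ k fun x : EuclideanSpace ℝ σ => eval x.ofLp p := by
  simp only [eval_eq']
  fun_prop

lemma fderiv_eval_apply (p : MvPolynomial σ ℝ) (x v : EuclideanSpace ℝ σ) :
    fderiv ℝ (fun y : EuclideanSpace ℝ σ => eval y.ofLp p) x v =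
      ∑ i, v i * eval x.ofLp (pderiv i p) := by
  classical
  have hdiff (q : MvPolynomial σ ℝ) :
      DifferentiableAt ℝ (fun y : EuclideanSpace ℝ σ => eval y.ofLp q) x :=
    (contDiff_eval q (k := 1)).differentiable one_ne_zero x
  induction p using MvPolynomial.induction_on with
  | C a => simp
  | add p q hp hq =>
    simp only [map_add, mul_add, Finset.sum_add_distrib, ← hp, ← hq]
    rw [fderiv_fun_add (hdiff p) (hdiff q), add_apply]
  | mul_X p i hp =>
    have hX : HasFDerivAt (fun y : EuclideanSpace ℝ σ => y i) (EuclideanSpace.proj (𝕜 := ℝ) i) x :=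
      (EuclideanSpace.proj (𝕜 := ℝ) i).hasFDerivAt
    simp only [map_mul, eval_X, pderiv_mul, map_add, mul_add, Finset.sum_add_distrib]
    rw [fderiv_fun_mul (hdiff p) hX.differentiableAt, hX.fderiv]
    simp [hp, pderiv_X, Pi.single_apply, apply_ite, Finset.mul_sum, mul_comm, mul_left_comm,
      add_comm]

lemma exists_eval_eq_add_inner_of_mem_restrictTotalDegree_one {p : MvPolynomial σ ℝ}
    (hp : p ∈ restrictTotalDegree σ ℝ 1) :
    ∃ a v, ∀ x : EuclideanSpace ℝ σ, eval x.ofLp p = a + ⟪v, x⟫ := by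
  obtain ⟨h, r, hh, hr, rfl⟩ := exists_isHomogeneous_add_of_mem_restrictTotalDegree hp
  obtain ⟨a, ha⟩ := exists_eval_eq_of_mem_restrictTotalDegree_zero hr
  have hpderiv (i : σ) : ∃ c, ∀ x : EuclideanSpace ℝ σ, eval x.ofLp (pderiv i h) = c :=
    exists_eval_eq_of_mem_restrictTotalDegree_zero
      (mem_restrictTotalDegree_of_isHomogeneous hh.pderiv le_rfl)
  choose c hc using hpderiv
  refine ⟨a, WithLp.toLp 2 c, fun x => ?_⟩
  rw [map_add, ha, ← one_nsmul h, ← hh.sum_X_mul_pderiv]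
  simp [hc, PiLp.inner_apply, add_comm]

end PolynomialFunction

section SphereMeasure

instance : IsFiniteMeasure (sphMeasure n) where
  measure_univ_lt_top := by
    rw [sphMeasure, Measure.smul_apply, smul_eq_mul]
    exact ENNReal.inv_mul_le_one _ |>.trans_lt ENNReal.one_lt_top

lemma ae_mem_sphere : ∀ᵐ θ ∂sphMeasure n, θ ∈ sphere (0 : E n) 1 :=
  Measure.ae_smul_measure ((ae_map_iff measurable_subtype_coe.aemeasurable
    isClosed_sphere.measurableSet).2 (Eventually.of_forall fun θ => θ.2)) _

lemma restrict_sphere : (sphMeasure n).restrict (sphere (0 : E n) 1) = sphMeasure n :=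
  Measure.restrict_eq_self_of_ae_mem ae_mem_sphere

variable {F : Type*} [NormedAddCommGroup F] {g : E n → F}

lemma integrable_of_continuousOn_sphere (hg : ContinuousOn g (sphere (0 : E n) 1)) :
    Integrable g (sphMeasure n) := by
  rw [← restrict_sphere]
  exact hg.integrableOn_compact (isCompact_sphere 0 1)

lemma memLp_of_continuousOn_sphere (hg : ContinuousOn g (sphere (0 : E n) 1)) (p : ℝ≥0∞) :
    MemLp g p (sphMeasure n) := by
  obtain ⟨C, hC⟩ := (isCompact_sphere (0 : E n) 1).exists_bound_of_continuousOn hg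
  exact .of_bound (integrable_of_continuousOn_sphere hg).aestronglyMeasurable C
    (ae_mem_sphere.mono hC)

lemma integral_congr_on_sphere [NormedSpace ℝ F] {h : E n → F}
    (hgh : ∀ θ ∈ sphere (0 : E n) 1, g θ = h θ) :
    ∫ θ, g θ ∂sphMeasure n = ∫ θ, h θ ∂sphMeasure n :=
  integral_congr_ae (ae_mem_sphere.mono hgh)

open scoped Pointwise in
lemma map_sphMeasure (L : E n ≃ₗᵢ[ℝ] E n) : (sphMeasure n).map L = sphMeasure n := by
  have hcone (s : Set (E n)) (hs : MeasurableSet s) :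
      (volume : Measure (E n)).toSphere.map Subtype.val s =
        Module.finrank ℝ (E n) * volume (Set.Ioo (0 : ℝ) 1 • (sphere (0 : E n) 1 ∩ s)) := by
    rw [Measure.map_apply measurable_subtype_coe hs,
      Measure.toSphere_apply' _ (measurable_subtype_coe hs), Subtype.image_preimage_coe]
  have himage (s : Set (E n)) : Set.Ioo (0 : ℝ) 1 • (sphere (0 : E n) 1 ∩ L ⁻¹' s) =
      L.symm '' (Set.Ioo (0 : ℝ) 1 • (sphere (0 : E n) 1 ∩ s)) := by
    rw [← Set.image2_smul, ← Set.image2_smul,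
      Set.image_image2_distrib_right fun a b => map_smul _ a b, Set.image_inter L.symm.injective,
      L.symm.image_sphere, map_zero, L.symm.image_eq_preimage_symm s, L.symm_symm]
  rw [sphMeasure, Measure.map_smul]
  congr 1
  ext s hs
  rw [Measure.map_apply L.continuous.measurable hs, hcone _ (L.continuous.measurable hs), himage,
    hcone s hs, L.symm.image_eq_preimage_symm,
    L.symm.symm.measurePreserving.measure_preimage_emb
      L.symm.symm.toHomeomorph.measurableEmbedding]

end SphereMeasure

section IntegrationByParts

variable {B : E n →L[ℝ] E n} {g h : E n → ℝ}

lemma continuousOn_sphere_of_contDiffAt {k : WithTop ℕ∞}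
    (hg : ∀ θ ∈ sphere (0 : E n) 1, ContDiffAt ℝ k g θ) : ContinuousOn g (sphere (0 : E n) 1) :=
  fun θ hθ => (hg θ hθ).continuousAt.continuousWithinAt

lemma continuousOn_fderiv_apply (hg : ∀ θ ∈ sphere (0 : E n) 1, ContDiffAt ℝ 1 g θ) :
    ContinuousOn (fun θ => fderiv ℝ g θ (B θ)) (sphere (0 : E n) 1) := fun θ hθ =>
  ((((hg θ hθ).fderiv_right (m := 0) le_rfl).continuousAt).clm_apply
    B.continuous.continuousAt).continuousWithinAt

lemma exists_flow_of_mem_skewAdjoint (hB : B ∈ skewAdjoint (E n →L[ℝ] E n)) :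
    ∃ Φ : ℝ → E n ≃ₗᵢ[ℝ] E n,
      (∀ x, Φ 0 x = x) ∧ ∀ t x, HasDerivAt (fun s => Φ s x) (B (Φ t x)) t := by
  let : NormedAlgebra ℚ (E n →L[ℝ] E n) := .restrictScalars ℚ ℝ _
  let Φ (t : ℝ) : E n ≃ₗᵢ[ℝ] E n := Unitary.linearIsometryEquiv
    ⟨_, NormedSpace.exp_mem_unitary_of_mem_skewAdjoint (skewAdjoint.smul_mem t hB)⟩
  have hΦ (t : ℝ) (x : E n) : Φ t x = NormedSpace.exp (t • B) x := rfl
  refine ⟨Φ, fun x => by simp [hΦ, zero_smul ℝ B], fun t x => ?_⟩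
  simp only [hΦ]
  simpa using (hasDerivAt_exp_smul_const' B t).clm_apply (hasDerivAt_const t x)

lemma integral_fderiv_apply_eq_zero (hB : B ∈ skewAdjoint (E n →L[ℝ] E n))
    (hg : ∀ θ ∈ sphere (0 : E n) 1, ContDiffAt ℝ 1 g θ) :
    ∫ θ, fderiv ℝ g θ (B θ) ∂sphMeasure n = 0 := by
  obtain ⟨Φ, hΦ_zero, hΦ⟩ := exists_flow_of_mem_skewAdjoint hB
  have hΦs (t : ℝ) : Set.MapsTo (Φ t) (sphere (0 : E n) 1) (sphere 0 1) := fun θ hθ => by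
    simpa using hθ
  have hdc := continuousOn_fderiv_apply (B := B) hg
  have hgΦc (t : ℝ) := integrable_of_continuousOn_sphere <|
    (continuousOn_sphere_of_contDiffAt hg).comp (Φ t).continuous.continuousOn (hΦs t)
  have hdΦc (t : ℝ) := integrable_of_continuousOn_sphere <|
    hdc.comp (Φ t).continuous.continuousOn (hΦs t)
  obtain ⟨C, hC⟩ := (isCompact_sphere (0 : E n) 1).exists_bound_of_continuousOn hdc
  have hderiv := (hasDerivAt_integral_of_dominated_loc_of_deriv_le (μ := sphMeasure n) (x₀ := 0)
    (bound := fun _ => C) univ_mem (Eventually.of_forall fun t => (hgΦc t).aestronglyMeasurable)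
    (hgΦc 0) (hdΦc 0).aestronglyMeasurable
    (ae_mem_sphere.mono fun θ hθ t _ => hC _ (hΦs t hθ)) (integrable_const C)
    (ae_mem_sphere.mono fun θ hθ t _ =>
      ((hg _ (hΦs t hθ)).differentiableAt one_ne_zero).hasFDerivAt.comp_hasDerivAt t (hΦ t θ))).2
  have hconst (t : ℝ) : ∫ θ, g (Φ t θ) ∂sphMeasure n = ∫ θ, g θ ∂sphMeasure n := by
    conv_rhs => rw [← map_sphMeasure (Φ t)]
    exact ((Φ t).toHomeomorph.measurableEmbedding.integral_map g).symm
  simp only [Function.comp_apply, hconst, hΦ_zero] at hderiv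
  exact hderiv.unique (hasDerivAt_const _ _)

lemma integral_fderiv_apply_mul (hB : B ∈ skewAdjoint (E n →L[ℝ] E n))
    (hg : ∀ θ ∈ sphere (0 : E n) 1, ContDiffAt ℝ 1 g θ)
    (hh : ∀ θ ∈ sphere (0 : E n) 1, ContDiffAt ℝ 1 h θ) :
    ∫ θ, fderiv ℝ g θ (B θ) * h θ ∂sphMeasure n =
      -∫ θ, g θ * fderiv ℝ h θ (B θ) ∂sphMeasure n := by
  have hgB_h := (continuousOn_fderiv_apply (B := B) hg).mul (continuousOn_sphere_of_contDiffAt hh)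
  have hg_hB := (continuousOn_sphere_of_contDiffAt hg).mul (continuousOn_fderiv_apply (B := B) hh)
  rw [eq_neg_iff_add_eq_zero]
  calc ∫ θ, fderiv ℝ g θ (B θ) * h θ ∂sphMeasure n + ∫ θ, g θ * fderiv ℝ h θ (B θ) ∂sphMeasure n
      = ∫ θ, (fderiv ℝ g θ (B θ) * h θ + g θ * fderiv ℝ h θ (B θ)) ∂sphMeasure n :=
        (integral_add (integrable_of_continuousOn_sphere hgB_h)
          (integrable_of_continuousOn_sphere hg_hB)).symm
    _ = ∫ θ, fderiv ℝ (fun x => g x * h x) θ (B θ) ∂sphMeasure n :=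
        integral_congr_on_sphere fun θ hθ => by
          rw [fderiv_fun_mul ((hg θ hθ).differentiableAt one_ne_zero)
            ((hh θ hθ).differentiableAt one_ne_zero)]
          simp only [add_apply, smul_apply, smul_eq_mul]
          ring
    _ = 0 := integral_fderiv_apply_eq_zero hB fun θ hθ => (hg θ hθ).mul (hh θ hθ)

end IntegrationByParts

section SphericalDerivatives

variable {B : E n →L[ℝ] E n} {f : E n → ℝ} {x : E n}

lemma projPerp_apply (x w : E n) : projPerp x w = w - ⟪x, w⟫ • x := rfl

lemma projPerp_of_inner_eq_zero {w : E n} (hw : ⟪x, w⟫ = 0) : projPerp x w = w := by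
  rw [projPerp_apply, hw, zero_smul, sub_zero]

lemma projPerp_self (hx : ‖x‖ = 1) : projPerp x x = 0 := by
  rw [projPerp_apply, real_inner_self_eq_norm_sq, hx, one_pow, one_smul, sub_self]

lemma inner_projPerp_self (hx : ‖x‖ = 1) (w : E n) : ⟪x, projPerp x w⟫ = 0 := by
  rw [projPerp_apply, inner_sub_right, real_inner_smul_right, real_inner_self_eq_norm_sq, hx]
  ring

lemma norm_projPerp_sq (hx : ‖x‖ = 1) (w : E n) : ‖projPerp x w‖ ^ 2 = ‖w‖ ^ 2 - ⟪x, w⟫ ^ 2 := by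
  rw [projPerp_apply, norm_sub_sq_real, real_inner_smul_right, real_inner_comm, norm_smul, hx,
    mul_one, Real.norm_eq_abs, sq_abs]
  ring

lemma sum_sq_eq_one (hx : ‖x‖ = 1) : ∑ i, x i ^ 2 = 1 := by
  rw [← EuclideanSpace.real_norm_sq_eq, hx, one_pow]

lemma sum_norm_projPerp_single_sq (hx : ‖x‖ = 1) :
    ∑ i, ‖projPerp x (EuclideanSpace.single i 1)‖ ^ 2 = n - 1 := by
  simp [norm_projPerp_sq hx, EuclideanSpace.inner_single_right, sum_sq_eq_one hx]

lemma sum_smul_map_single {F : Type*} [AddCommGroup F] [Module ℝ F] [TopologicalSpace F]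
    (A : E n →L[ℝ] F) (x : E n) : ∑ i, x i • A (EuclideanSpace.single i 1) = A x := by
  conv_rhs => rw [← (EuclideanSpace.basisFun (Fin n) ℝ).sum_repr x]
  simp

lemma sgrad_eq_projPerp (f : E n → ℝ) (x : E n) : sgrad f x = projPerp x (gradient f x) := by
  rw [sgrad, projPerp_apply, real_inner_comm]

lemma inner_sgrad_self (hx : ‖x‖ = 1) : ⟪x, sgrad f x⟫ = 0 := by
  rw [sgrad_eq_projPerp, inner_projPerp_self hx]

lemma sHess_self (hx : ‖x‖ = 1) : sHess f x x = 0 := by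
  simp [sHess, projPerp_self hx]

lemma hasFDerivAt_gradient (hf : ContDiffAt ℝ 2 f x) :
    HasFDerivAt (gradient f) (hess f x) x :=
  ((InnerProductSpace.toDual ℝ (E n)).symm.toContinuousLinearEquiv.differentiableAt.comp x
    ((hf.fderiv_right (m := 1) le_rfl).differentiableAt one_ne_zero)).hasFDerivAt

lemma inner_hess (hf : ContDiffAt ℝ 2 f x) (v w : E n) :
    ⟪hess f x v, w⟫ = fderiv ℝ (fderiv ℝ f) x v w := by
  have hd : HasFDerivAt (fderiv ℝ f) (fderiv ℝ (fderiv ℝ f) x) x :=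
    ((hf.fderiv_right (m := 1) le_rfl).differentiableAt one_ne_zero).hasFDerivAt
  have hgrad := (hasFDerivAt_gradient hf).inner ℝ (hasFDerivAt_const w x)
  simp only [inner_gradient_left] at hgrad
  simpa using DFunLike.congr_fun (hgrad.unique (hd.clm_apply (hasFDerivAt_const w x))) v

lemma inner_hess_comm (hf : ContDiffAt ℝ 2 f x) (v w : E n) :
    ⟪hess f x v, w⟫ = ⟪hess f x w, v⟫ := by
  rw [inner_hess hf, inner_hess hf, (hf.isSymmSndFDerivAt (by simp)).eq]

lemma inner_apply_of_mem_skewAdjoint (hB : B ∈ skewAdjoint (E n →L[ℝ] E n)) (v w : E n) :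
    ⟪v, B w⟫ = -⟪B v, w⟫ := by
  rw [← B.adjoint_inner_left, ← ContinuousLinearMap.star_eq_adjoint, skewAdjoint.mem_iff.1 hB,
    neg_apply, inner_neg_left]

lemma inner_apply_self_of_mem_skewAdjoint (hB : B ∈ skewAdjoint (E n →L[ℝ] E n)) (x : E n) :
    ⟪x, B x⟫ = 0 := by
  have := inner_apply_of_mem_skewAdjoint hB x x
  rw [real_inner_comm x (B x)] at this
  linarith

lemma gradient_fderiv_apply (hB : B ∈ skewAdjoint (E n →L[ℝ] E n)) (hf : ContDiffAt ℝ 2 f x) :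
    gradient (fun y => fderiv ℝ f y (B y)) x = hess f x (B x) - B (gradient f x) := by
  refine HasGradientAt.gradient (hasGradientAt_iff_hasFDerivAt.2 ?_)
  simp only [← inner_gradient_left]
  refine ((hasFDerivAt_gradient hf).inner ℝ B.hasFDerivAt).congr_fderiv ?_
  ext v
  simp only [ContinuousLinearMap.comp_apply, ContinuousLinearMap.prod_apply, fderivInnerCLM_apply,
    InnerProductSpace.toDual_apply_apply, inner_sub_left]
  rw [inner_hess_comm hf v, inner_apply_of_mem_skewAdjoint hB (gradient f x)]
  ring

lemma sgrad_fderiv_apply (hB : B ∈ skewAdjoint (E n →L[ℝ] E n)) (hf : ContDiffAt ℝ 2 f x) :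
    sgrad (fun y => fderiv ℝ f y (B y)) x = sHess f x (B x) - projPerp x (B (sgrad f x)) := by
  have hBx : projPerp x (B x) = B x :=
    projPerp_of_inner_eq_zero (inner_apply_self_of_mem_skewAdjoint hB x)
  rw [sgrad_eq_projPerp, gradient_fderiv_apply hB hf, sHess, sgrad]
  simp [hBx]

lemma fderiv_apply_eq_inner_sgrad (hB : B ∈ skewAdjoint (E n →L[ℝ] E n)) (f : E n → ℝ) (x : E n) :
    fderiv ℝ f x (B x) = ⟪sgrad f x, B x⟫ := by
  rw [sgrad, inner_sub_left, real_inner_smul_left, inner_apply_self_of_mem_skewAdjoint hB, mul_zero,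
    sub_zero, inner_gradient_left]

end SphericalDerivatives

section Wedge

variable {ι V : Type*} [Fintype ι] [NormedAddCommGroup V] [InnerProductSpace ℝ V]

lemma sum_sum_norm_sub_swap_sq (w : ι → ι → V) :
    ∑ i, ∑ j, ‖w i j - w j i‖ ^ 2 =
      2 * (∑ i, ∑ j, ‖w i j‖ ^ 2 - ∑ i, ∑ j, ⟪w i j, w j i⟫) := by
  have hswap : ∑ i, ∑ j, ‖w j i‖ ^ 2 = ∑ i, ∑ j, ‖w i j‖ ^ 2 := Finset.sum_comm
  simp only [norm_sub_sq_real, Finset.sum_add_distrib, Finset.sum_sub_distrib, ← Finset.mul_sum,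
    hswap]
  ring

lemma sum_sum_inner (v w : ι → V) : ∑ i, ∑ j, ⟪v i, w j⟫ = ⟪∑ i, v i, ∑ j, w j⟫ := by
  rw [sum_inner]
  simp only [inner_sum]

-- The summand is the `(i, j)` coordinate of `x ∧ u - g ∧ p`. In the second order case, `g` is the
-- spherical gradient, and `u` and `p` are the columns of `f''_S(x)` and of the projection on `x^⊥`.
lemma sum_sum_norm_wedge_sq {x g : ι → ℝ} {u p : ι → V} (hx : ∑ i, x i ^ 2 = 1)
    (hxg : ∑ i, x i * g i = 0) (hxu : ∑ i, x i • u i = 0) (hxp : ∑ i, x i • p i = 0)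
    (hgp : ‖∑ i, g i • p i‖ ^ 2 = ∑ i, g i ^ 2) :
    ∑ i, ∑ j, ‖(x i • u j + g j • p i) - (x j • u i + g i • p j)‖ ^ 2 =
      2 * (∑ i, ‖u i‖ ^ 2 + (∑ i, ‖p i‖ ^ 2 - 1) * ∑ i, g i ^ 2) := by
  have hnorm : ∑ i, ∑ j, ‖x i • u j + g j • p i‖ ^ 2 =
      ∑ i, ‖u i‖ ^ 2 + (∑ i, ‖p i‖ ^ 2) * ∑ i, g i ^ 2 := by
    have hterm (i j : ι) : ‖x i • u j + g j • p i‖ ^ 2 =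
        x i ^ 2 * ‖u j‖ ^ 2 + 2 * ⟪x i • p i, g j • u j⟫ + ‖p i‖ ^ 2 * g j ^ 2 := by
      rw [norm_add_sq_real, norm_smul, norm_smul, mul_pow, mul_pow, Real.norm_eq_abs,
        Real.norm_eq_abs, sq_abs, sq_abs, real_inner_smul_left, real_inner_smul_right,
        real_inner_smul_left, real_inner_smul_right, real_inner_comm]
      ring
    simp only [hterm, Finset.sum_add_distrib, ← Finset.mul_sum, ← Finset.sum_mul,
      sum_sum_inner, hx, hxp, inner_zero_left]
    ring
  have hinner : ∑ i, ∑ j, ⟪x i • u j + g j • p i, x j • u i + g i • p j⟫ = ∑ i, g i ^ 2 := by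
    have hterm (i j : ι) : ⟪x i • u j + g j • p i, x j • u i + g i • p j⟫ =
        ⟪x i • u i, x j • u j⟫ + x i * g i * ⟪u j, p j⟫ + ⟪u i, p i⟫ * (x j * g j)
          + ⟪g i • p i, g j • p j⟫ := by
      simp only [inner_add_left, inner_add_right, real_inner_smul_left, real_inner_smul_right]
      rw [real_inner_comm (u i) (u j), real_inner_comm (u i) (p i)]
      ring
    simp only [hterm, Finset.sum_add_distrib, ← Finset.mul_sum, ← Finset.sum_mul,
      sum_sum_inner, hxu, hxg, real_inner_self_eq_norm_sq, hgp, norm_zero]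
    ring
  rw [sum_sum_norm_sub_swap_sq fun i j => x i • u j + g j • p i, hnorm, hinner]
  ring

end Wedge

section Rotations

/-- The infinitesimal rotation `x ↦ x_i e_j - x_j e_i` of `ℝⁿ`. -/
def rotGen (i j : Fin n) : E n →L[ℝ] E n :=
  (EuclideanSpace.proj (𝕜 := ℝ) i).smulRight (EuclideanSpace.single j 1) -
    (EuclideanSpace.proj (𝕜 := ℝ) j).smulRight (EuclideanSpace.single i 1)

/-- The derivative of `g` along the rotation field `rotGen i j`. -/
def rotDeriv (i j : Fin n) (g : E n → ℝ) (x : E n) : ℝ := fderiv ℝ g x (rotGen i j x)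

variable {f g h : E n → ℝ} {x : E n}

lemma rotGen_apply (i j : Fin n) (x : E n) :
    rotGen i j x = x i • EuclideanSpace.single j 1 - x j • EuclideanSpace.single i 1 := rfl

lemma rotGen_mem_skewAdjoint (i j : Fin n) : rotGen i j ∈ skewAdjoint (E n →L[ℝ] E n) := by
  rw [skewAdjoint.mem_iff, ContinuousLinearMap.star_eq_adjoint, eq_comm,
    ContinuousLinearMap.eq_adjoint_iff]
  intro x y
  simp only [neg_apply, rotGen_apply, inner_neg_left, inner_sub_left, inner_sub_right,
    real_inner_smul_left, real_inner_smul_right, EuclideanSpace.inner_single_left,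
    EuclideanSpace.inner_single_right, map_one, one_mul, conj_trivial]
  ring

lemma rotDeriv_eval (i j : Fin n) (p : MvPolynomial (Fin n) ℝ) (x : E n) :
    rotDeriv i j (fun y : E n => MvPolynomial.eval y.ofLp p) x =
      MvPolynomial.eval x.ofLp (rotPoly i j p) := by
  rw [rotDeriv, fderiv_eval_apply, rotPoly_apply]
  simp [rotGen_apply, sub_mul, Finset.sum_sub_distrib]

lemma contDiffAt_rotDeriv {m k : WithTop ℕ∞} (hf : ContDiffAt ℝ k f x) (hm : m + 1 ≤ k)
    (i j : Fin n) : ContDiffAt ℝ m (rotDeriv i j f) x :=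
  (hf.fderiv_right hm).clm_apply (rotGen i j).contDiff.contDiffAt

lemma integral_rotDeriv_mul (hg : ∀ θ ∈ sphere (0 : E n) 1, ContDiffAt ℝ 1 g θ)
    (hh : ∀ θ ∈ sphere (0 : E n) 1, ContDiffAt ℝ 1 h θ) (i j : Fin n) :
    ∫ θ, rotDeriv i j g θ * h θ ∂sphMeasure n = -∫ θ, g θ * rotDeriv i j h θ ∂sphMeasure n :=
  integral_fderiv_apply_mul (rotGen_mem_skewAdjoint i j) hg hh

lemma sum_rotDeriv_sq (hx : ‖x‖ = 1) (g : E n → ℝ) :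
    ∑ i, ∑ j, rotDeriv i j g x ^ 2 = 2 * ‖sgrad g x‖ ^ 2 := by
  have hwedge := sum_sum_norm_wedge_sq (x := x.ofLp) (g := 0) (u := (sgrad g x).ofLp) (p := 0)
    (sum_sq_eq_one hx) (by simp) (by simpa [PiLp.inner_apply, mul_comm] using inner_sgrad_self hx)
    (by simp) (by simp)
  have hterm (i j : Fin n) : rotDeriv i j g x = x i * sgrad g x j - x j * sgrad g x i := by
    rw [rotDeriv, fderiv_apply_eq_inner_sgrad (rotGen_mem_skewAdjoint i j), rotGen_apply]
    simp [inner_sub_right, real_inner_smul_right, EuclideanSpace.inner_single_right]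
  simpa [hterm, EuclideanSpace.real_norm_sq_eq] using hwedge

lemma sgrad_rotDeriv (hf : ContDiffAt ℝ 2 f x) (i j : Fin n) :
    sgrad (rotDeriv i j f) x =
      (x i • sHess f x (EuclideanSpace.single j 1)
        + sgrad f x j • projPerp x (EuclideanSpace.single i 1))
      - (x j • sHess f x (EuclideanSpace.single i 1)
        + sgrad f x i • projPerp x (EuclideanSpace.single j 1)) := by
  have hsgrad := sgrad_fderiv_apply (rotGen_mem_skewAdjoint i j) hf
  simp only [rotGen_apply _ _ x, rotGen_apply _ _ (sgrad f x), map_sub, map_smul] at hsgrad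
  rw [show rotDeriv i j f = fun y => fderiv ℝ f y (rotGen i j y) from rfl, hsgrad]
  abel

lemma sum_norm_sgrad_rotDeriv_sq (hx : ‖x‖ = 1) (hf : ContDiffAt ℝ 2 f x) :
    ∑ i, ∑ j, ‖sgrad (rotDeriv i j f) x‖ ^ 2 =
      2 * hsNormSq (sHess f x) + 2 * (n - 2) * ‖sgrad f x‖ ^ 2 := by
  have hxg : ∑ i, x i * sgrad f x i = 0 := by
    simpa [PiLp.inner_apply, mul_comm] using inner_sgrad_self (f := f) hx
  simp only [sgrad_rotDeriv hf]
  rw [sum_sum_norm_wedge_sq (sum_sq_eq_one hx) hxg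
    (by rw [sum_smul_map_single, sHess_self hx]) (by rw [sum_smul_map_single, projPerp_self hx])
    (by rw [sum_smul_map_single, projPerp_of_inner_eq_zero (inner_sgrad_self hx),
      EuclideanSpace.real_norm_sq_eq]),
    sum_norm_projPerp_single_sq hx, ← EuclideanSpace.real_norm_sq_eq, hsNormSq]
  ring

end Rotations

section Poincare

open MvPolynomial

lemma inner_toLp {α : Type*} [MeasurableSpace α] {μ : Measure α} {g h : α → ℝ} (hg : MemLp g 2 μ)
    (hh : MemLp h 2 μ) : ⟪hg.toLp g, hh.toLp h⟫ = ∫ x, g x * h x ∂μ := by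
  rw [L2.inner_def]
  refine integral_congr_ae ?_
  filter_upwards [hg.coeFn_toLp, hh.coeFn_toLp] with x hgx hhx
  rw [hgx, hhx, real_inner_comm]
  rfl

lemma norm_toLp_sq {α : Type*} [MeasurableSpace α] {μ : Measure α} {g : α → ℝ} (hg : MemLp g 2 μ) :
    ‖hg.toLp g‖ ^ 2 = ∫ x, g x ^ 2 ∂μ := by
  rw [← real_inner_self_eq_norm_sq, inner_toLp]
  simp only [sq]

lemma memLp_eval (p : MvPolynomial (Fin n) ℝ) :
    MemLp (fun θ : E n => eval θ.ofLp p) 2 (sphMeasure n) :=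
  memLp_of_continuousOn_sphere (contDiff_eval p (k := 0)).continuous.continuousOn 2

/-- Restriction of polynomials to the sphere, with values in `L²(σ_{n-1})`. -/
def polyL2 (n : ℕ) : MvPolynomial (Fin n) ℝ →ₗ[ℝ] Lp ℝ 2 (sphMeasure n) where
  toFun p := (memLp_eval p).toLp _
  map_add' p q := by rw [← MemLp.toLp_add]; congr 1; ext θ; simp
  map_smul' c p := by rw [RingHom.id_apply, ← MemLp.toLp_const_smul]; congr 1; ext θ; simp

lemma polyL2_apply (p : MvPolynomial (Fin n) ℝ) : polyL2 n p = (memLp_eval p).toLp _ := rfl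

lemma polyL2_sum_X_sq_mul (p : MvPolynomial (Fin n) ℝ) :
    polyL2 n ((∑ i, X i ^ 2) * p) = polyL2 n p := by
  refine MemLp.toLp_congr (memLp_eval _) (memLp_eval p) (ae_mem_sphere.mono fun θ hθ => ?_)
  simp [sum_sq_eq_one (norm_eq_of_mem_sphere ⟨θ, hθ⟩)]

lemma toLp_mem_closure_range_polyL2 {g : E n → ℝ} (hg : ContinuousOn g (sphere (0 : E n) 1)) :
    (memLp_of_continuousOn_sphere hg 2).toLp g ∈ closure (Set.range (polyL2 n)) := by
  rw [Metric.mem_closure_range_iff]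
  intro ε hε
  set c : ℝ := measureUnivNNReal (sphMeasure n) ^ (2 : ℝ≥0∞).toReal⁻¹
  have : 0 ≤ c := by positivity
  obtain ⟨p, hp⟩ := exists_eval_sub_lt (isCompact_sphere (0 : E n) 1) hg
    (div_pos hε (by positivity : 0 < c + 1))
  refine ⟨p, ?_⟩
  rw [dist_comm, dist_eq_norm, polyL2_apply, ← MemLp.toLp_sub]
  calc _ ≤ c * (ε / (c + 1)) := by
        refine Lp.norm_le_of_ae_bound (by positivity) ?_
        filter_upwards [((memLp_eval p).sub (memLp_of_continuousOn_sphere hg 2)).coeFn_toLp,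
          ae_mem_sphere] with θ hθ hθs
        rw [hθ]
        exact (hp θ hθs).le
    _ < ε := by rw [mul_div_assoc', div_lt_iff₀ (by positivity)]; nlinarith

/-- The eigenvalue `d (d + n - 2)` of minus the Laplacian of `S^{n-1}` on spherical harmonics of
degree `d`. -/
def sphericalEigenvalue (n d : ℕ) : ℝ := d * (d + n - 2)

lemma monotone_sphericalEigenvalue (hn : 1 ≤ n) : Monotone (sphericalEigenvalue n) := by
  refine monotone_nat_of_le_succ fun d => ?_
  have : (1 : ℝ) ≤ n := mod_cast hn
  rw [sphericalEigenvalue, sphericalEigenvalue, Nat.cast_succ]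
  nlinarith [d.cast_nonneg (α := ℝ)]

lemma sub_two_le_sphericalEigenvalue (hn : 1 ≤ n) (k : ℕ) :
    (n - 2 : ℝ) ≤ sphericalEigenvalue n (k + 1) :=
  calc (n - 2 : ℝ) ≤ sphericalEigenvalue n 1 := by rw [sphericalEigenvalue]; push_cast; linarith
    _ ≤ sphericalEigenvalue n (k + 1) := monotone_sphericalEigenvalue hn (by lia)

lemma sphericalEigenvalue_nonneg (hn : 1 ≤ n) (d : ℕ) : 0 ≤ sphericalEigenvalue n d :=
  calc (0 : ℝ) = sphericalEigenvalue n 0 := by simp [sphericalEigenvalue]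
    _ ≤ sphericalEigenvalue n d := monotone_sphericalEigenvalue hn d.zero_le

-- The factor `2` appears because every pair of indices contributes both `(i, j)` and `(j, i)`.
lemma isSkewFiltration_polyL2 (n : ℕ) :
    IsSkewFiltration (restrictTotalDegree (Fin n) ℝ) (polyL2 n)
      (fun a : Fin n × Fin n => (rotPoly (R := ℝ) a.1 a.2).toLinearMap)
      fun d => 2 * sphericalEigenvalue n d where
  mono := restrictTotalDegree_mono
  exists_mem p := ⟨p.totalDegree, (mem_restrictTotalDegree _ _ _).2 le_rfl⟩
  map_mem a _ _ hp := rotPoly_mem_restrictTotalDegree hp a.1 a.2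
  skew a p q := by
    simp only [polyL2_apply, inner_toLp, Derivation.coeFn_coe,
      ← rotDeriv_eval]
    exact integral_rotDeriv_mul (fun θ _ => (contDiff_eval p).contDiffAt)
      (fun θ _ => (contDiff_eval q).contDiffAt) a.1 a.2
  casimir d p hp := by
    simpa [Fintype.sum_prod_type, sphericalEigenvalue] using
      exists_map_sum_rotPoly_rotPoly (polyL2 n) polyL2_sum_X_sq_mul hp

/-- `f` is orthogonal in `L²(σ_{n-1})` to the restrictions of all polynomials of degree at most
`k`, i.e. to all spherical harmonics of degree at most `k`. -/
def OrthogonalToDegreeLE (k : ℕ) (f : E n → ℝ) : Prop :=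
  ∀ p ∈ restrictTotalDegree (Fin n) ℝ k, ∫ θ, f θ * eval θ.ofLp p ∂sphMeasure n = 0

variable {k : ℕ} {f g : E n → ℝ}

lemma OrthogonalToDegreeLE.rotDeriv (hfk : OrthogonalToDegreeLE k f)
    (hf : ∀ θ ∈ sphere (0 : E n) 1, ContDiffAt ℝ 1 f θ) (i j : Fin n) :
    OrthogonalToDegreeLE k (rotDeriv i j f) := fun p hp => by
  rw [integral_rotDeriv_mul hf fun θ _ => (contDiff_eval p).contDiffAt]
  simp only [rotDeriv_eval, hfk _ (rotPoly_mem_restrictTotalDegree hp i j), neg_zero]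

lemma continuousOn_rotDeriv (hg : ∀ θ ∈ sphere (0 : E n) 1, ContDiffAt ℝ 1 g θ) (i j : Fin n) :
    ContinuousOn (rotDeriv i j g) (sphere (0 : E n) 1) :=
  continuousOn_fderiv_apply hg

lemma continuousOn_sgrad (hg : ∀ θ ∈ sphere (0 : E n) 1, ContDiffAt ℝ 1 g θ) :
    ContinuousOn (sgrad g) (sphere (0 : E n) 1) := by
  have hgrad : ContinuousOn (gradient g) (sphere (0 : E n) 1) := fun θ hθ =>
    ((InnerProductSpace.toDual ℝ (E n)).symm.continuous.continuousAt.comp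
      ((hg θ hθ).fderiv_right (m := 0) le_rfl).continuousAt).continuousWithinAt
  exact hgrad.sub ((hgrad.inner (𝕜 := ℝ) (continuousOn_id' _)).fun_smul (continuousOn_id' _))

lemma sum_integral_rotDeriv_sq (hg : ∀ θ ∈ sphere (0 : E n) 1, ContDiffAt ℝ 1 g θ) :
    ∑ a : Fin n × Fin n, ∫ θ, rotDeriv a.1 a.2 g θ ^ 2 ∂sphMeasure n =
      2 * ∫ θ, ‖sgrad g θ‖ ^ 2 ∂sphMeasure n := by
  rw [← integral_finsetSum _ fun a _ =>
    integrable_of_continuousOn_sphere ((continuousOn_rotDeriv hg a.1 a.2).pow 2),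
    ← integral_const_mul]
  refine integral_congr_on_sphere fun θ hθ => ?_
  rw [Fintype.sum_prod_type, sum_rotDeriv_sq (norm_eq_of_mem_sphere ⟨θ, hθ⟩)]

lemma sum_integral_norm_sgrad_rotDeriv_sq (hf : ∀ θ ∈ sphere (0 : E n) 1, ContDiffAt ℝ 2 f θ) :
    ∑ a : Fin n × Fin n, ∫ θ, ‖sgrad (rotDeriv a.1 a.2 f) θ‖ ^ 2 ∂sphMeasure n =
      2 * ∫ θ, hsNormSq (sHess f θ) ∂sphMeasure n +
        2 * (n - 2) * ∫ θ, ‖sgrad f θ‖ ^ 2 ∂sphMeasure n := by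
  have hrot (a : Fin n × Fin n) :
      Integrable (fun θ => ‖sgrad (rotDeriv a.1 a.2 f) θ‖ ^ 2) (sphMeasure n) :=
    integrable_of_continuousOn_sphere ((continuousOn_sgrad fun θ hθ =>
      contDiffAt_rotDeriv (hf θ hθ) le_rfl a.1 a.2).norm.pow 2)
  have hgrad : Integrable (fun θ => ‖sgrad f θ‖ ^ 2) (sphMeasure n) :=
    integrable_of_continuousOn_sphere ((continuousOn_sgrad fun θ hθ =>
      (hf θ hθ).of_le one_le_two).norm.pow 2)
  rw [← sub_eq_iff_eq_add, ← integral_finsetSum _ fun a _ => hrot a, ← integral_const_mul,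
    ← integral_const_mul, ← integral_sub (integrable_finsetSum _ fun a _ => hrot a)
      (hgrad.const_mul _)]
  refine integral_congr_on_sphere fun θ hθ => ?_
  rw [Fintype.sum_prod_type, sum_norm_sgrad_rotDeriv_sq (norm_eq_of_mem_sphere ⟨θ, hθ⟩) (hf θ hθ)]
  ring

theorem sphericalEigenvalue_mul_integral_sq_le_integral_norm_sgrad_sq (hn : 1 ≤ n)
    (hg : ∀ θ ∈ sphere (0 : E n) 1, ContDiffAt ℝ 1 g θ) (hgk : OrthogonalToDegreeLE k g) :
    sphericalEigenvalue n (k + 1) * ∫ θ, g θ ^ 2 ∂sphMeasure n ≤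
      ∫ θ, ‖sgrad g θ‖ ^ 2 ∂sphMeasure n := by
  have hgc := continuousOn_sphere_of_contDiffAt hg
  have hrotL2 (a : Fin n × Fin n) : MemLp (rotDeriv a.1 a.2 g) 2 (sphMeasure n) :=
    memLp_of_continuousOn_sphere (continuousOn_rotDeriv hg a.1 a.2) 2
  have hgap := (isSkewFiltration_polyL2 n).mul_norm_sq_le_of_weakDeriv (k := k)
    ((monotone_sphericalEigenvalue hn).const_mul zero_le_two)
    (mul_nonneg zero_le_two (sphericalEigenvalue_nonneg hn _))
    (h := fun a => (hrotL2 a).toLp _) (toLp_mem_closure_range_polyL2 hgc)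
    (fun a p => by
      simp only [polyL2_apply, inner_toLp, Derivation.coeFn_coe,
        ← rotDeriv_eval]
      exact integral_rotDeriv_mul hg (fun θ _ => (contDiff_eval p).contDiffAt) a.1 a.2)
    (fun p hp => by simpa only [polyL2_apply, inner_toLp] using hgk p hp)
  simp only [norm_toLp_sq, sum_integral_rotDeriv_sq hg] at hgap
  linarith

theorem integral_sq_le_integral_hsNormSq_sHess (hn : 1 ≤ n)
    (hf : ∀ θ ∈ sphere (0 : E n) 1, ContDiffAt ℝ 2 f θ) (hfk : OrthogonalToDegreeLE k f) :
    sphericalEigenvalue n (k + 1) * (sphericalEigenvalue n (k + 1) - (n - 2)) *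
        ∫ θ, f θ ^ 2 ∂sphMeasure n ≤
      ∫ θ, hsNormSq (sHess f θ) ∂sphMeasure n := by
  have hf₁ : ∀ θ ∈ sphere (0 : E n) 1, ContDiffAt ℝ 1 f θ := fun θ hθ =>
    (hf θ hθ).of_le one_le_two
  set ev := sphericalEigenvalue n (k + 1)
  have hfirst : ev * ∫ θ, f θ ^ 2 ∂sphMeasure n ≤ ∫ θ, ‖sgrad f θ‖ ^ 2 ∂sphMeasure n :=
    sphericalEigenvalue_mul_integral_sq_le_integral_norm_sgrad_sq hn hf₁ hfk
  have hrot : ∑ a : Fin n × Fin n, ev * ∫ θ, rotDeriv a.1 a.2 f θ ^ 2 ∂sphMeasure n ≤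
      ∑ a : Fin n × Fin n, ∫ θ, ‖sgrad (rotDeriv a.1 a.2 f) θ‖ ^ 2 ∂sphMeasure n :=
    Finset.sum_le_sum fun a _ => sphericalEigenvalue_mul_integral_sq_le_integral_norm_sgrad_sq hn
      (fun θ hθ => contDiffAt_rotDeriv (hf θ hθ) le_rfl a.1 a.2) (hfk.rotDeriv hf₁ a.1 a.2)
  rw [← Finset.mul_sum, sum_integral_rotDeriv_sq hf₁, sum_integral_norm_sgrad_rotDeriv_sq hf]
    at hrot
  calc ev * (ev - (n - 2)) * ∫ θ, f θ ^ 2 ∂sphMeasure n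
      = (ev - (n - 2)) * (ev * ∫ θ, f θ ^ 2 ∂sphMeasure n) := by ring
    _ ≤ (ev - (n - 2)) * ∫ θ, ‖sgrad f θ‖ ^ 2 ∂sphMeasure n :=
        mul_le_mul_of_nonneg_left hfirst (sub_nonneg.2 (sub_two_le_sphericalEigenvalue hn k))
    _ ≤ ∫ θ, hsNormSq (sHess f θ) ∂sphMeasure n := by linarith

lemma orthogonalToDegreeLE_zero (hf : ∫ θ, f θ ∂sphMeasure n = 0) :
    OrthogonalToDegreeLE 0 f := fun p hp => by
  obtain ⟨a, ha⟩ := exists_eval_eq_of_mem_restrictTotalDegree_zero hp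
  simp only [ha, integral_mul_const, hf, zero_mul]

lemma orthogonalToDegreeLE_one (hfc : ContinuousOn f (sphere (0 : E n) 1))
    (hf : ∫ θ, f θ ∂sphMeasure n = 0) (hlin : ∀ v : E n, ∫ θ, ⟪v, θ⟫ * f θ ∂sphMeasure n = 0) :
    OrthogonalToDegreeLE 1 f := fun p hp => by
  obtain ⟨a, v, hav⟩ := exists_eval_eq_add_inner_of_mem_restrictTotalDegree_one hp
  have hconst : Integrable (fun θ => f θ * a) (sphMeasure n) :=
    (integrable_of_continuousOn_sphere hfc).mul_const a
  have hinner : Integrable (fun θ => ⟪v, θ⟫ * f θ) (sphMeasure n) :=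
    integrable_of_continuousOn_sphere (ContinuousOn.mul (by fun_prop) hfc)
  calc ∫ θ, f θ * eval θ.ofLp p ∂sphMeasure n
      = ∫ θ, (f θ * a + ⟪v, θ⟫ * f θ) ∂sphMeasure n := by simp only [hav, mul_add, mul_comm ⟪v, _⟫]
    _ = 0 := by rw [integral_add hconst hinner, integral_mul_const, hf, hlin, zero_mul, add_zero]

end Poincare

/-- **Proposition 5.2 (Statement 14).** Second order Poincaré-type inequalities on the
sphere in terms of the spherical Hessian. -/
theorem second_order_poincare_sphere
    {n : ℕ} (hn : 2 ≤ n) (f : E n → ℝ) (U : Set (E n)) (hU : IsOpen U)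
    (hUS : Metric.sphere (0 : E n) 1 ⊆ U) (hf : ContDiffOn ℝ 2 f U)
    (hmean : ∫ θ, f θ ∂sphMeasure n = 0) :
    (∫ θ, (f θ) ^ 2 ∂sphMeasure n ≤
      (1 / ((n : ℝ) - 1)) * ∫ θ, hsNormSq (sHess f θ) ∂sphMeasure n) ∧
    ((∀ v : E n, ∫ θ, ⟪v, θ⟫ * f θ ∂sphMeasure n = 0) →
      ∫ θ, (f θ) ^ 2 ∂sphMeasure n ≤
        (1 / (2 * (n : ℝ) * ((n : ℝ) + 2))) * ∫ θ, hsNormSq (sHess f θ) ∂sphMeasure n) := by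
  have hf₂ : ∀ θ ∈ sphere (0 : E n) 1, ContDiffAt ℝ 2 f θ := fun θ hθ =>
    hf.contDiffAt (hU.mem_nhds (hUS hθ))
  have hn' : (2 : ℝ) ≤ n := mod_cast hn
  have hn₁ : 1 ≤ n := one_le_two.trans hn
  refine ⟨?_, fun hlin => ?_⟩
  · have hk := integral_sq_le_integral_hsNormSq_sHess hn₁ hf₂ (orthogonalToDegreeLE_zero hmean)
    have hconst : sphericalEigenvalue n (0 + 1) * (sphericalEigenvalue n (0 + 1) - (n - 2)) =
        (n : ℝ) - 1 := by
      rw [sphericalEigenvalue]; push_cast; ring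
    rwa [one_div_mul_eq_div, le_div_iff₀' (by linarith), ← hconst]
  · have hk := integral_sq_le_integral_hsNormSq_sHess hn₁ hf₂
      (orthogonalToDegreeLE_one (continuousOn_sphere_of_contDiffAt hf₂) hmean hlin)
    have hconst : sphericalEigenvalue n (1 + 1) * (sphericalEigenvalue n (1 + 1) - (n - 2)) =
        2 * (n : ℝ) * (n + 2) := by
      rw [sphericalEigenvalue]; push_cast; ring
    rwa [one_div_mul_eq_div, le_div_iff₀' (by positivity), ← hconst]

end SecondOrderConc
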